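/- Fix t_c, t ≥ 0 and set N_c = exp(D(p(·|c)‖q(·|c)) + t) for each c ∈ 𝒞 and n_c ≥ max(2, exp(D(p_{QC}‖p_C) + t_c)). Then the expected number of samples drawn in one run of hierarchical sampling satisfies E_{C₁,…,C_{n_c} ∼ p_C i.i.d., m ∼ w_C}[n_c + N_{C_m}] ≤ n_c + (χ²(p_C‖p_{QC}) + 1) · (n_c/(n_c − 1)) · E_{c∼p_{QC}}[exp(D(p(·|c)‖q(·|c)) + t)]. -/

import Mathlib

open scoped BigOperators

noncomputable section

namespace HS

variable {𝒳 𝒞 : Type*}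

/-- Pushforward of a mass function on `𝒳` under `g : 𝒳 → 𝒞`. -/
def push (g : 𝒳 → 𝒞) (q : 𝒳 → ℝ) (c : 𝒞) : ℝ :=
  ∑' x, Set.indicator {x : 𝒳 | g x = c} q x

/-- Conditional mass function on the block `g⁻¹(c)`. -/
def cond (g : 𝒳 → 𝒞) (q : 𝒳 → ℝ) (c : 𝒞) (x : 𝒳) : ℝ :=
  Set.indicator {x : 𝒳 | g x = c} (fun x => q x / push g q c) x

/-- Kullback–Leibler divergence between mass functions. -/
def kl {α : Type*} (p q : α → ℝ) : ℝ :=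
  ∑' x, p x * Real.log (p x / q x)

/-- Chi-squared divergence `χ²(pC‖pQC) = Σ_{c : pQC(c)>0} pC(c)²/pQC(c) − 1`. -/
def chiSq [Fintype 𝒞] (pC pQC : 𝒞 → ℝ) : ℝ :=
  (∑ c, Set.indicator {c : 𝒞 | 0 < pQC c} (fun c => pC c ^ 2 / pQC c) c) - 1

end HS

end

open HS

/-!
Write `r = pQC / pC` for the importance weight and `n` for the number of draws. The weight of the
draw `m` is `r (C m) / ∑ j, r (C j)`. Omitting the term `j = m` from the denominator makes it
independent of `C m`, and the AM-HM inequality bounds the inverse of the remaining sum by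
`(n - 1)⁻² ∑ j ≠ m, (r (C j))⁻¹`. By independence each of the `n - 1` resulting terms has
expectation `E_pC[r N] * E_pC[r⁻¹]`, that is `E_pQC[N] * (χ²(pC‖pQC) + 1)`. Summing over `m`
gives the factor `n / (n - 1)`.
-/

namespace HS

section Push

variable {𝒳 𝒞 : Type*} (g : 𝒳 → 𝒞) {q : 𝒳 → ℝ}

theorem push_nonneg (hq : ∀ x, 0 ≤ q x) (c : 𝒞) : 0 ≤ push g q c :=
  tsum_nonneg (Set.indicator_nonneg fun x _ => hq x)

theorem sum_push_of_hasSum [Fintype 𝒞] {a : ℝ} (hq : HasSum q a) : ∑ c, push g q c = a := by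
  classical
  calc ∑ c, push g q c
      = ∑' x, ∑ c, Set.indicator {x | g x = c} q x :=
        (Summable.tsum_finsetSum fun c _ => hq.summable.indicator _).symm
    _ = ∑' x, q x := by simp [Set.indicator_apply]
    _ = a := hq.tsum_eq

end Push

theorem chiSq_add_one {𝒞 : Type*} [Fintype 𝒞] {P : 𝒞 → ℝ} (Q : 𝒞 → ℝ) (hP : ∀ c, 0 ≤ P c) :
    chiSq Q P + 1 = ∑ c, Q c ^ 2 / P c := by
  rw [chiSq, sub_add_cancel]
  refine Finset.sum_congr rfl fun c _ => Set.indicator_apply_eq_self.mpr fun hc => ?_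
  rw [le_antisymm (not_lt.mp hc) (hP c), div_zero]

end HS

section IidExpect

variable {ι κ R : Type*} [Fintype ι] [DecidableEq ι] [Fintype κ]

/-- The expectation of `F (C)` for a family `C` of draws, indexed by `ι`, that are independent with
common mass function `Q`. It is defined without assuming that `Q` has total mass one. -/
def iidExpect [CommSemiring R] (Q : κ → R) (F : (ι → κ) → R) : R :=
  ∑ C, (∏ i, Q (C i)) * F C

section CommSemiring

variable [CommSemiring R] {Q : κ → R}

theorem iidExpect_add (F G : (ι → κ) → R) :
    iidExpect Q (fun C => F C + G C) = iidExpect Q F + iidExpect Q G := by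
  simp only [iidExpect, mul_add, Finset.sum_add_distrib]

theorem iidExpect_const_mul (a : R) (F : (ι → κ) → R) :
    iidExpect Q (fun C => a * F C) = a * iidExpect Q F := by
  simp only [iidExpect, Finset.mul_sum, mul_left_comm]

theorem iidExpect_sum {α : Type*} (s : Finset α) (F : α → (ι → κ) → R) :
    iidExpect Q (fun C => ∑ a ∈ s, F a C) = ∑ a ∈ s, iidExpect Q (F a) := by
  simp only [iidExpect, Finset.mul_sum]
  exact Finset.sum_comm

theorem iidExpect_prod (f : ι → κ → R) :
    iidExpect Q (fun C => ∏ i, f i (C i)) = ∏ i, ∑ c, Q c * f i c := by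
  simp only [iidExpect, Finset.prod_univ_sum, Fintype.piFinset_univ, Finset.prod_mul_distrib]

theorem iidExpect_const (hQ : ∑ c, Q c = 1) (a : R) :
    iidExpect Q (fun _ : ι → κ => a) = a := by
  have h_one : iidExpect Q (fun _ : ι → κ => 1) = 1 := by
    simpa [hQ] using iidExpect_prod (ι := ι) (Q := Q) fun _ _ => 1
  simpa [h_one] using iidExpect_const_mul (Q := Q) a fun _ : ι → κ => 1

theorem iidExpect_mul_of_ne (hQ : ∑ c, Q c = 1) {i j : ι} (hij : i ≠ j) (f h : κ → R) :
    iidExpect Q (fun C => f (C i) * h (C j)) = (∑ c, Q c * f c) * ∑ c, Q c * h c := by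
  let F : ι → κ → R := fun k c => (if k = i then f c else 1) * (if k = j then h c else 1)
  have h_factor (k : ι) : ∑ c, Q c * F k c =
      (if k = i then ∑ c, Q c * f c else 1) * (if k = j then ∑ c, Q c * h c else 1) := by
    rcases eq_or_ne k i with rfl | hki
    · simp [F, hij]
    · rcases eq_or_ne k j with rfl | hkj
      · simp [F, hki]
      · simp [F, hki, hkj, hQ]
  calc iidExpect Q (fun C => f (C i) * h (C j))
      = iidExpect Q (fun C => ∏ k, F k (C k)) := by
        simp only [F, Finset.prod_mul_distrib, Finset.prod_ite_eq', Finset.mem_univ, if_true]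
    _ = ∏ k, ∑ c, Q c * F k c := iidExpect_prod F
    _ = (∑ c, Q c * f c) * ∑ c, Q c * h c := by
        simp only [h_factor, Finset.prod_mul_distrib, Finset.prod_ite_eq', Finset.mem_univ, if_true]

end CommSemiring

theorem iidExpect_mono [CommSemiring R] [PartialOrder R] [IsOrderedRing R] {Q : κ → R}
    (hQ : ∀ c, 0 ≤ Q c) {F G : (ι → κ) → R} (hFG : ∀ C, (∀ i, 0 < Q (C i)) → F C ≤ G C) :
    iidExpect Q F ≤ iidExpect Q G := by
  refine Finset.sum_le_sum fun C _ => ?_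
  by_cases hC : ∀ i, 0 < Q (C i)
  · exact mul_le_mul_of_nonneg_left (hFG C hC) (Finset.prod_nonneg fun i _ => hQ (C i))
  · obtain ⟨i, hi⟩ := not_forall.mp hC
    have h_prod : ∏ i, Q (C i) = 0 :=
      Finset.prod_eq_zero (Finset.mem_univ i) ((hQ (C i)).eq_of_not_lt hi).symm
    simp only [h_prod, zero_mul, le_refl]

end IidExpect

theorem card_sq_div_sum_le_sum_inv {ι K : Type*} [Field K] [LinearOrder K]
    [IsStrictOrderedRing K] {s : Finset ι} {r : ι → K} (hr : ∀ i ∈ s, 0 < r i) :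
    (s.card : K) ^ 2 / ∑ i ∈ s, r i ≤ ∑ i ∈ s, (r i)⁻¹ := by
  simpa using Finset.sq_sum_div_le_sum_sq_div s (fun _ => (1 : K)) hr

section SelfNormWeight

variable {ι κ K : Type*} [Fintype ι] [Field K]

/-- The self-normalized importance weight `r m / ∑ j, r j`: the probability with which the index `m`
is selected when the draws have unnormalized weights `r`. -/
def selfNormWeight (r : ι → K) (m : ι) : K :=
  r m / ∑ j, r j

variable [LinearOrder K] [IsStrictOrderedRing K]

theorem sum_selfNormWeight [Nonempty ι] {r : ι → K} (hr : ∀ i, 0 < r i) :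
    ∑ m, selfNormWeight r m = 1 := by
  have hS : 0 < ∑ j, r j := Finset.sum_pos (fun j _ => hr j) Finset.univ_nonempty
  simp only [selfNormWeight, ← Finset.sum_div, div_self hS.ne']

variable [DecidableEq ι] [Nontrivial ι]

theorem selfNormWeight_le_mul_sum_inv {r : ι → K} (hr : ∀ i, 0 < r i) (m : ι) :
    selfNormWeight r m ≤
      ((Fintype.card ι : K) - 1)⁻¹ ^ 2 * (r m * ∑ j ∈ Finset.univ.erase m, (r j)⁻¹) := by
  set s := Finset.univ.erase m
  have h_card : (s.card : K) = (Fintype.card ι : K) - 1 :=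
    Finset.cast_card_erase_of_mem (Finset.mem_univ m)
  have hs : s.Nonempty := (Finset.univ_nontrivial (α := ι)).erase_nonempty
  have hs_card : (s.card : K) ≠ 0 := Nat.cast_ne_zero.mpr hs.card_ne_zero
  have h_drop : ∑ j ∈ s, r j ≤ ∑ j, r j :=
    Finset.sum_le_sum_of_subset_of_nonneg (Finset.erase_subset _ _) fun j _ _ => (hr j).le
  rw [← h_card]
  calc selfNormWeight r m
      ≤ r m / ∑ j ∈ s, r j :=
        div_le_div_of_nonneg_left (hr m).le (Finset.sum_pos (fun j _ => hr j) hs) h_drop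
    _ = (s.card : K)⁻¹ ^ 2 * (r m * ((s.card : K) ^ 2 / ∑ j ∈ s, r j)) := by
        field_simp
    _ ≤ (s.card : K)⁻¹ ^ 2 * (r m * ∑ j ∈ s, (r j)⁻¹) := by
        have := (hr m).le
        gcongr
        exact card_sq_div_sum_le_sum_inv fun _ _ => hr _

variable [Fintype κ] {Q r f : κ → K}

theorem iidExpect_selfNormWeight_mul_le (hQ0 : ∀ c, 0 ≤ Q c) (hQ1 : ∑ c, Q c = 1)
    (hr : ∀ c, 0 < Q c → 0 < r c) (hf : ∀ c, 0 ≤ f c) (m : ι) :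
    iidExpect Q (fun C => selfNormWeight (fun i => r (C i)) m * f (C m)) ≤
      ((Fintype.card ι : K) - 1)⁻¹ * ((∑ c, Q c * (r c * f c)) * ∑ c, Q c * (r c)⁻¹) := by
  set A := ∑ c, Q c * (r c * f c)
  set B := ∑ c, Q c * (r c)⁻¹
  set a : K := (Fintype.card ι : K) - 1
  have h_card : ((Finset.univ.erase m).card : K) = a :=
    Finset.cast_card_erase_of_mem (Finset.mem_univ m)
  have h_pointwise (C : ι → κ) (hC : ∀ i, 0 < Q (C i)) :
      selfNormWeight (fun i => r (C i)) m * f (C m) ≤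
        a⁻¹ ^ 2 * ∑ j ∈ Finset.univ.erase m, r (C m) * f (C m) * (r (C j))⁻¹ :=
    calc selfNormWeight (fun i => r (C i)) m * f (C m)
        ≤ a⁻¹ ^ 2 * (r (C m) * ∑ j ∈ Finset.univ.erase m, (r (C j))⁻¹) * f (C m) :=
          mul_le_mul_of_nonneg_right
            (selfNormWeight_le_mul_sum_inv (fun i => hr _ (hC i)) m) (hf _)
      _ = a⁻¹ ^ 2 * ∑ j ∈ Finset.univ.erase m, r (C m) * f (C m) * (r (C j))⁻¹ := by
          rw [← Finset.mul_sum]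
          ring
  have h_indep (j : ι) (hj : j ∈ Finset.univ.erase m) :
      iidExpect Q (fun C => r (C m) * f (C m) * (r (C j))⁻¹) = A * B :=
    iidExpect_mul_of_ne hQ1 (Finset.ne_of_mem_erase hj).symm (fun c => r c * f c) fun c => (r c)⁻¹
  calc iidExpect Q (fun C => selfNormWeight (fun i => r (C i)) m * f (C m))
      ≤ iidExpect Q (fun C =>
          a⁻¹ ^ 2 * ∑ j ∈ Finset.univ.erase m, r (C m) * f (C m) * (r (C j))⁻¹) :=
        iidExpect_mono hQ0 h_pointwise
    _ = a⁻¹ ^ 2 * ∑ _j ∈ Finset.univ.erase m, A * B := by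
        rw [iidExpect_const_mul, iidExpect_sum, Finset.sum_congr rfl h_indep]
    _ = a⁻¹ * (A * B) := by
        rw [Finset.sum_const, nsmul_eq_mul, h_card]
        field_simp

theorem iidExpect_sum_selfNormWeight_mul_le (hQ0 : ∀ c, 0 ≤ Q c) (hQ1 : ∑ c, Q c = 1)
    (hr : ∀ c, 0 < Q c → 0 < r c) (hf : ∀ c, 0 ≤ f c) :
    iidExpect Q (fun C : ι → κ => ∑ m, selfNormWeight (fun i => r (C i)) m * f (C m)) ≤
      (∑ c, Q c * (r c)⁻¹) * ((Fintype.card ι : K) / ((Fintype.card ι : K) - 1)) *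
        ∑ c, Q c * (r c * f c) := by
  set A := ∑ c, Q c * (r c * f c)
  set B := ∑ c, Q c * (r c)⁻¹
  calc _ = ∑ m, iidExpect Q (fun C : ι → κ => selfNormWeight (fun i => r (C i)) m * f (C m)) :=
        iidExpect_sum _ _
    _ ≤ ∑ _m : ι, ((Fintype.card ι : K) - 1)⁻¹ * (A * B) :=
        Finset.sum_le_sum fun m _ => iidExpect_selfNormWeight_mul_le hQ0 hQ1 hr hf m
    _ = B * ((Fintype.card ι : K) / ((Fintype.card ι : K) - 1)) * A := by
        rw [Finset.sum_const, Finset.card_univ, nsmul_eq_mul]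
        ring

theorem iidExpect_sum_selfNormWeight_mul_const_add_le (hQ0 : ∀ c, 0 ≤ Q c)
    (hQ1 : ∑ c, Q c = 1) (hr : ∀ c, 0 < Q c → 0 < r c) (hf : ∀ c, 0 ≤ f c) (a : K) :
    iidExpect Q (fun C : ι → κ => ∑ m, selfNormWeight (fun i => r (C i)) m * (a + f (C m))) ≤
      a + (∑ c, Q c * (r c)⁻¹) * ((Fintype.card ι : K) / ((Fintype.card ι : K) - 1)) *
        ∑ c, Q c * (r c * f c) := by
  have h_split (C : ι → κ) (hC : ∀ i, 0 < Q (C i)) :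
      ∑ m, selfNormWeight (fun i => r (C i)) m * (a + f (C m)) =
        a + ∑ m, selfNormWeight (fun i => r (C i)) m * f (C m) := by
    simp only [mul_add, Finset.sum_add_distrib, ← Finset.sum_mul,
      sum_selfNormWeight fun i => hr _ (hC i), one_mul]
  calc _ ≤ iidExpect Q (fun C : ι → κ =>
          a + ∑ m, selfNormWeight (fun i => r (C i)) m * f (C m)) :=
        iidExpect_mono hQ0 fun C hC => (h_split C hC).le
    _ ≤ _ := by
        rw [iidExpect_add, iidExpect_const hQ1]
        gcongr
        exact iidExpect_sum_selfNormWeight_mul_le hQ0 hQ1 hr hf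

end SelfNormWeight

theorem stmt8_general {𝒞 : Type*} [Fintype 𝒞] (P Q N : 𝒞 → ℝ)
    (hP0 : ∀ c, 0 ≤ P c) (hQ0 : ∀ c, 0 ≤ Q c) (hQ1 : ∑ c, Q c = 1)
    (hac : ∀ c, P c = 0 → Q c = 0) (hN : ∀ c, 0 ≤ N c) (n : ℕ) (hn : 2 ≤ n) :
    ∑ C : Fin n → 𝒞, (∏ j, Q (C j)) *
        ∑ m : Fin n, ((P (C m) / Q (C m)) / ∑ j, P (C j) / Q (C j)) * ((n : ℝ) + N (C m))
      ≤ (n : ℝ) + (chiSq Q P + 1) * ((n : ℝ) / ((n : ℝ) - 1)) * ∑ c, P c * N c := by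
  have : Nontrivial (Fin n) := Fin.nontrivial_iff_two_le.mpr hn
  have hn1 : (0 : ℝ) ≤ (n : ℝ) - 1 := sub_nonneg.mpr (by exact_mod_cast one_le_two.trans hn)
  have h_weight (c : 𝒞) (hc : 0 < Q c) : 0 < P c / Q c :=
    div_pos ((hP0 c).lt_of_ne' fun h => hc.ne' (hac c h)) hc
  have h_chiSq : ∑ c, Q c * (P c / Q c)⁻¹ = chiSq Q P + 1 := by
    simp only [chiSq_add_one Q hP0, inv_div, ← mul_div_assoc, sq]
  have h_chiSq_nonneg : 0 ≤ chiSq Q P + 1 := by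
    rw [chiSq_add_one Q hP0]
    exact Finset.sum_nonneg fun c _ => div_nonneg (sq_nonneg _) (hP0 c)
  have h_cancel (c : 𝒞) : Q c * (P c / Q c) ≤ P c :=
    (mul_div_left_comm _ _ _).trans_le (mul_le_of_le_one_right (hP0 c) (div_self_le_one _))
  have h_target : ∑ c, Q c * (P c / Q c * N c) ≤ ∑ c, P c * N c := by
    simp only [← mul_assoc]
    exact Finset.sum_le_sum fun c _ => mul_le_mul_of_nonneg_right (h_cancel c) (hN c)
  calc _ ≤ (n : ℝ) + (chiSq Q P + 1) * ((n : ℝ) / ((n : ℝ) - 1)) *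
          ∑ c, Q c * (P c / Q c * N c) := by
        simpa only [iidExpect, selfNormWeight, Fintype.card_fin, h_chiSq] using
          iidExpect_sum_selfNormWeight_mul_const_add_le (ι := Fin n) hQ0 hQ1 h_weight hN n
    _ ≤ (n : ℝ) + (chiSq Q P + 1) * ((n : ℝ) / ((n : ℝ) - 1)) * ∑ c, P c * N c := by
        gcongr

/-- bound on the expected number of samples drawn in one run of
hierarchical sampling, with `N_c = exp(D(p(·|c)‖q(·|c)) + t)`. -/
theorem stmt8 {𝒳 𝒞 : Type*} [Countable 𝒳] [Fintype 𝒞]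
    (g : 𝒳 → 𝒞) (p q : 𝒳 → ℝ)
    (hp0 : ∀ x, 0 ≤ p x) (hq0 : ∀ x, 0 ≤ q x)
    (hp1 : HasSum p 1) (hq1 : HasSum q 1)
    (hac : ∀ x, q x = 0 → p x = 0)
    (hacC1 : ∀ c, push g q c = 0 → push g p c = 0)
    (hacC2 : ∀ c, push g p c = 0 → push g q c = 0)
    (hKL : Summable fun x => p x * Real.log (p x / q x))
    (hKLcond : ∀ c : 𝒞, Summable fun x =>
      cond g p c x * Real.log (cond g p c x / cond g q c x))
    (tc t : ℝ) (htc : 0 ≤ tc) (ht : 0 ≤ t)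
    (nc : ℕ) (hnc2 : 2 ≤ nc)
    (hnc : Real.exp (kl (push g p) (push g q) + tc) ≤ (nc : ℝ))
    (N : 𝒞 → ℝ)
    (hN : ∀ c : 𝒞, N c = Real.exp (kl (cond g p c) (cond g q c) + t)) :
    ∑ C : Fin nc → 𝒞, (∏ j, push g q (C j)) *
        ∑ m : Fin nc,
          ((push g p (C m) / push g q (C m)) /
              ∑ j, push g p (C j) / push g q (C j)) * ((nc : ℝ) + N (C m))
      ≤ (nc : ℝ) + (chiSq (push g q) (push g p) + 1) * ((nc : ℝ) / ((nc : ℝ) - 1)) *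
          ∑ c, push g p c * Real.exp (kl (cond g p c) (cond g q c) + t) := by
  simp_rw [← hN]
  exact stmt8_general _ _ N (push_nonneg g hp0) (push_nonneg g hq0) (sum_push_of_hasSum g hq1)
    hacC2 (fun c => (hN c).symm ▸ Real.exp_nonneg _) nc hnc2
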